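/- For the family of line arrangements B_d (d ≥ 7) defined below, one has r(B_d) = d − 3 for all d ≥ 7. -/

import Mathlib

open Classical MvPolynomial

variable {K : Type*} [Field K] [CharZero K] {ℓ : ℕ}

/-- A (central) hyperplane arrangement: a finite set of nonzero linear forms,
pairwise non-proportional. -/
def IsArrangement (A : Finset (MvPolynomial (Fin ℓ) K)) : Prop :=
  (∀ α ∈ A, α ≠ 0 ∧ α.IsHomogeneous 1) ∧
    ∀ α ∈ A, ∀ β ∈ A, α ≠ β → ∀ c : K, α ≠ c • β

/-- The arrangement is essential: the common zero set of its forms is `{0}`. -/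
def IsEssential (A : Finset (MvPolynomial (Fin ℓ) K)) : Prop :=
  ∀ v : Fin ℓ → K, (∀ α ∈ A, eval v α = 0) → v = 0

/-- The defining polynomial `Q(A)`. -/
noncomputable def Qpoly (A : Finset (MvPolynomial (Fin ℓ) K)) : MvPolynomial (Fin ℓ) K :=
  ∏ α ∈ A, α

/-- Apply a derivation `θ = Σ θ_j ∂_j` to a polynomial. -/
noncomputable def applyDer (θ : Fin ℓ → MvPolynomial (Fin ℓ) K)
    (f : MvPolynomial (Fin ℓ) K) : MvPolynomial (Fin ℓ) K :=
  ∑ j, θ j * pderiv j f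

/-- The minimal degree of a Jacobian relation `r(A)`. -/
noncomputable def mdr (A : Finset (MvPolynomial (Fin ℓ) K)) : ℕ :=
  sInf {r | ∃ θ : Fin ℓ → MvPolynomial (Fin ℓ) K, θ ≠ 0 ∧
    (∀ j, (θ j).IsHomogeneous r) ∧ applyDer θ (Qpoly A) = 0}

/-- The number of elements `|A^H|` of the restriction of `A` to `H`:
the number of distinct subspaces `H ∩ ker α_L`, `L ∈ A \ {H}`. -/
noncomputable def restCard (A : Finset (MvPolynomial (Fin ℓ) K))
    (H : MvPolynomial (Fin ℓ) K) : ℕ :=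
  ((A.erase H).image fun L => {v : Fin ℓ → K | eval v H = 0 ∧ eval v L = 0}).card

/-- The linear form `a·x + b·y − z` in `ℚ[x,y,z]`. -/
noncomputable def lineL (a b : ℚ) : MvPolynomial (Fin 3) ℚ :=
  C a * X 0 + C b * X 1 - X 2

/-- The arrangement `B_{2p}` of `2p` lines with defining polynomial
`x·y·∏_{j=1}^{p−1} (x/2^j + y/3^j − z)(x/2^j + y/3^{j+1} − z)`. -/
noncomputable def baseB (p : ℕ) : Finset (MvPolynomial (Fin 3) ℚ) :=
  {X 0, X 1} ∪
    (Finset.Icc 1 (p - 1)).image (fun j => lineL (1 / 2 ^ j) (1 / 3 ^ j)) ∪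
    (Finset.Icc 1 (p - 1)).image (fun j => lineL (1 / 2 ^ j) (1 / 3 ^ (j + 1)))

/-- The family `B_d`, `d ≥ 7`: `B_{2p} = baseB p`, and
`B_{2p+1} = B_{2p} ∪ {x/2^p + y/3^p − z}`. -/
noncomputable def Bfam (d : ℕ) : Finset (MvPolynomial (Fin 3) ℚ) :=
  if d % 2 = 0 then baseB (d / 2)
  else insert (lineL (1 / 2 ^ (d / 2)) (1 / 3 ^ (d / 2))) (baseB (d / 2))

/-!
A Jacobian relation `θ` of `A` satisfies `α ∣ θ α` for every line `α` of `A`. Subtracting the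
multiple of the Euler derivation that cancels the `∂/∂y` component leaves `(v, 0, w)` with `x ∣ v`
and `w ≡ aᵢ v` on each line `Lᵢ = {aᵢ x + bᵢ y = z}`, so `v` vanishes at the intersection of any two
lines `Lᵢ`, `Lⱼ` with `aᵢ ≠ aⱼ`. If the degree `r` of the relation is at most `d - 4`, there are
`r + 2` lines `Lᵢ`; the last one meets `x = 0` and the others except its predecessor in `r + 1`
distinct points, hence divides `v`, and then `w`. Dividing it out lowers the degree by one, and by
induction `v = w = 0`.

Conversely, for a point `p` on `m` lines of an arrangement, differentiation along `p`, multiplied by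
the product of the other lines and corrected by the Euler derivation, is a relation of degree
`d - m`; the point `(1 : 0 : a₀)` of `B_d` lies on three lines.
-/

section Homogeneous

variable {R σ : Type*} [CommRing R]

theorem eval_smul_of_isHomogeneous {p : MvPolynomial σ R} {n : ℕ} (hp : p.IsHomogeneous n) (c : R)
    (v : σ → R) : eval (c • v) p = c ^ n * eval v p := by
  simp only [eval_eq, Finset.mul_sum]
  refine Finset.sum_congr rfl fun d hd => ?_
  simp only [Pi.smul_apply, smul_eq_mul, mul_pow, Finset.prod_mul_distrib,
    Finset.prod_pow_eq_pow_sum]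
  rw [← hp.degree_eq_sum_deg_support hd, mul_left_comm]

variable [IsDomain R]

theorem isHomogeneous_of_mul_left {f g : MvPolynomial σ R} {m n : ℕ} (hf : f.IsHomogeneous m)
    (hf₀ : f ≠ 0) (hfg : (f * g).IsHomogeneous (m + n)) : g.IsHomogeneous n := by
  let _ := MvPolynomial.gradedAlgebra (σ := σ) (R := R)
  have hcomp : homogeneousComponent (m + n) (f * g) = f * homogeneousComponent n g := by
    simp only [← decomposition.decompose'_apply]
    exact DirectSum.coe_decompose_mul_add_of_left_mem (homogeneousSubmodule σ R) hf
  rw [homogeneousComponent_eq_self hfg] at hcomp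
  exact mul_left_cancel₀ hf₀ hcomp ▸ homogeneousComponent_isHomogeneous n g

theorem eq_zero_of_dvd_of_isHomogeneous_of_lt {f g : MvPolynomial σ R} {m n : ℕ}
    (hf : f.IsHomogeneous m) (hg : g.IsHomogeneous n) (hnm : n < m) (hfg : f ∣ g) : g = 0 := by
  by_contra hg₀
  have := totalDegree_le_of_dvd_of_isDomain hfg hg₀
  rw [hf.totalDegree (ne_zero_of_dvd_ne_zero hg₀ hfg), hg.totalDegree hg₀] at this
  omega

theorem isHomogeneous_mul_of_isHomogeneous_mul {f f' g : MvPolynomial σ R} {m n : ℕ}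
    (hf : f.IsHomogeneous m) (hf₀ : f ≠ 0) (hf' : f'.IsHomogeneous m)
    (hfg : (f * g).IsHomogeneous n) : (f' * g).IsHomogeneous n := by
  obtain hnm | hmn := lt_or_ge n m
  · have hfg₀ := eq_zero_of_dvd_of_isHomogeneous_of_lt hf hfg hnm (dvd_mul_right f g)
    rw [(mul_eq_zero.mp hfg₀).resolve_left hf₀, mul_zero]
    exact isHomogeneous_zero σ R n
  · obtain ⟨k, rfl⟩ := Nat.exists_eq_add_of_le hmn
    exact hf'.mul (isHomogeneous_of_mul_left hf hf₀ hfg)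

theorem eval_add_smul_eq_zero_of_totalDegree_lt_card {p : MvPolynomial σ R} {s : Finset R}
    (hs : p.totalDegree < s.card) (v w : σ → R) (hp : ∀ t ∈ s, eval (v + t • w) p = 0) (t : R) :
    eval (v + t • w) p = 0 := by
  let P : Polynomial R := aeval (fun i => Polynomial.C (w i) * Polynomial.X + Polynomial.C (v i)) p
  have eval_P (t : R) : P.eval t = eval (v + t • w) p := by
    simp only [P, ← Polynomial.coe_evalRingHom, map_aeval, coe_eval₂Hom, eval]
    congr
    · ext; simp
    · ext; simp; ring
  have hdeg : P.natDegree ≤ p.totalDegree := by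
    simpa using aeval_natDegree_le p le_rfl _ fun i => Polynomial.natDegree_linear_le
  have hP : P = 0 :=
    Polynomial.eq_zero_of_natDegree_lt_card_of_eval_eq_zero' P s
      (fun t ht => (eval_P t).trans (hp t ht)) (hdeg.trans_lt hs)
  rw [← eval_P, hP, Polynomial.eval_zero]

end Homogeneous

theorem exists_eq_C_of_isHomogeneous_zero {R σ : Type*} [CommSemiring R] {p : MvPolynomial σ R}
    (hp : p.IsHomogeneous 0) : ∃ c, p = C c :=
  ⟨_, totalDegree_eq_zero_iff_eq_C.mp ((totalDegree_zero_iff_isHomogeneous σ).mpr hp)⟩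

theorem prime_of_isHomogeneous_one {F σ : Type*} [Field F] {α : MvPolynomial σ F}
    (hα : α.IsHomogeneous 1) (hα₀ : α ≠ 0) : Prime α := by
  refine (irreducible_of_totalDegree_eq_one (hα.totalDegree hα₀) fun c hc => ?_).prime
  obtain ⟨d, hd⟩ := ne_zero_iff.mp hα₀
  exact (ne_zero_of_dvd_ne_zero hd (hc d)).isUnit

section Derivations

variable {F : Type*} [Field F]

theorem applyDer_mul (θ : Fin ℓ → MvPolynomial (Fin ℓ) F) (f g : MvPolynomial (Fin ℓ) F) :
    applyDer θ (f * g) = applyDer θ f * g + f * applyDer θ g := by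
  simp only [applyDer, Finset.sum_mul, Finset.mul_sum, ← Finset.sum_add_distrib]
  exact Finset.sum_congr rfl fun j _ => by rw [pderiv_mul]; ring

theorem applyDer_X (θ : Fin ℓ → MvPolynomial (Fin ℓ) F) (i : Fin ℓ) : applyDer θ (X i) = θ i := by
  simp [applyDer, pderiv_X, Pi.single_apply]

theorem applyDer_C (θ : Fin ℓ → MvPolynomial (Fin ℓ) F) (c : F) : applyDer θ (C c) = 0 := by
  simp [applyDer]

theorem applyDer_mul_X (q : MvPolynomial (Fin ℓ) F) {f : MvPolynomial (Fin ℓ) F} {n : ℕ}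
    (hf : f.IsHomogeneous n) : applyDer (fun j => q * X j) f = n • (q * f) := by
  simp only [applyDer, mul_assoc, ← Finset.mul_sum, hf.sum_X_mul_pderiv, mul_smul_comm]

theorem isHomogeneous_applyDer_C (v : Fin ℓ → F) {f : MvPolynomial (Fin ℓ) F} {n : ℕ}
    (hf : f.IsHomogeneous n) : (applyDer (fun j => C (v j)) f).IsHomogeneous (n - 1) :=
  IsHomogeneous.sum _ _ _ fun j _ => hf.pderiv.C_mul (v j)

theorem applyDer_C_of_isHomogeneous_one (v : Fin ℓ → F) {α : MvPolynomial (Fin ℓ) F}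
    (hα : α.IsHomogeneous 1) : applyDer (fun j => C (v j)) α = C (eval v α) := by
  choose c hc using fun j => exists_eq_C_of_isHomogeneous_zero (hα.pderiv (i := j))
  have heuler := hα.sum_X_mul_pderiv
  rw [one_smul] at heuler
  conv_rhs => rw [← heuler]
  simp [applyDer, hc]

theorem isHomogeneous_Qpoly {A : Finset (MvPolynomial (Fin ℓ) F)} (hA : IsArrangement A) :
    (Qpoly A).IsHomogeneous A.card := by
  simpa [Qpoly] using IsHomogeneous.prod A (fun α => α) (fun _ => 1) fun α hα => (hA.1 α hα).2

theorem Qpoly_ne_zero {A : Finset (MvPolynomial (Fin ℓ) F)} (hA : IsArrangement A) :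
    Qpoly A ≠ 0 :=
  Finset.prod_ne_zero_iff.mpr fun α hα => (hA.1 α hα).1

theorem isArrangement_of_subset {A B : Finset (MvPolynomial (Fin ℓ) F)} (hA : IsArrangement A)
    (hBA : B ⊆ A) : IsArrangement B :=
  ⟨fun α hα => hA.1 α (hBA hα), fun α hα β hβ => hA.2 α (hBA hα) β (hBA hβ)⟩

theorem not_dvd_of_mem {A : Finset (MvPolynomial (Fin ℓ) F)} (hA : IsArrangement A)
    {α β : MvPolynomial (Fin ℓ) F} (hα : α ∈ A) (hβ : β ∈ A) (hαβ : α ≠ β) : ¬ α ∣ β := by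
  rintro ⟨q, rfl⟩
  have hq : q.IsHomogeneous 0 :=
    isHomogeneous_of_mul_left (hA.1 α hα).2 (hA.1 α hα).1 (hA.1 _ hβ).2
  obtain ⟨c, rfl⟩ := exists_eq_C_of_isHomogeneous_zero hq
  exact hA.2 (α * C c) hβ α hα hαβ.symm c (by rw [mul_comm, C_mul'])

theorem dvd_applyDer_of_mem {A : Finset (MvPolynomial (Fin ℓ) F)} (hA : IsArrangement A)
    {θ : Fin ℓ → MvPolynomial (Fin ℓ) F} (hθ : applyDer θ (Qpoly A) = 0)
    {α : MvPolynomial (Fin ℓ) F} (hα : α ∈ A) : α ∣ applyDer θ α := by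
  have hprime : Prime α := prime_of_isHomogeneous_one (hA.1 α hα).2 (hA.1 α hα).1
  rw [Qpoly, ← Finset.mul_prod_erase A _ hα, applyDer_mul] at hθ
  have hdvd : α ∣ applyDer θ α * ∏ β ∈ A.erase α, β :=
    (dvd_add_left (dvd_mul_right α _)).mp (hθ ▸ dvd_zero α)
  refine (hprime.dvd_or_dvd hdvd).resolve_right fun hprod => ?_
  obtain ⟨β, hβ, hαβ⟩ := hprime.exists_mem_finset_dvd hprod
  obtain ⟨hβα, hβA⟩ := Finset.mem_erase.mp hβ
  exact not_dvd_of_mem hA hα hβA hβα.symm hαβ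

end Derivations

/-- A nonzero Jacobian relation of degree `r` for `f`, encoded by its coefficient vector `θ`, so
that `mdr A` is the least `r` for which `Qpoly A` has such a relation. -/
def IsJacobianRelation {F : Type*} [Field F] (f : MvPolynomial (Fin ℓ) F) (r : ℕ)
    (θ : Fin ℓ → MvPolynomial (Fin ℓ) F) : Prop :=
  θ ≠ 0 ∧ (∀ j, (θ j).IsHomogeneous r) ∧ applyDer θ f = 0

section MultiplicityBound

variable {F : Type*} [Field F] [CharZero F] [Nontrivial (Fin ℓ)]

-- Multiplying the derivative along `v` by `g` keeps the degree at `deg g`, and subtracting a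
-- multiple of the Euler derivation makes it annihilate `f * g`.
theorem exists_isJacobianRelation_mul {f g : MvPolynomial (Fin ℓ) F} {m n : ℕ} {v : Fin ℓ → F}
    (hv : v ≠ 0) (hf : f.IsHomogeneous m) (hfv : applyDer (fun j => C (v j)) f = 0)
    (hg : g.IsHomogeneous n) (hg₀ : g ≠ 0) : ∃ θ, IsJacobianRelation (f * g) n θ := by
  obtain ⟨j, hj⟩ := Function.ne_iff.mp hv
  obtain rfl | hn := Nat.eq_zero_or_pos n
  · refine ⟨fun j => C (v j), fun h => hj (C_injective (Fin ℓ) F (by simpa using congrFun h j)),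
      fun j => isHomogeneous_C _ _, ?_⟩
    obtain ⟨c, rfl⟩ := exists_eq_C_of_isHomogeneous_zero hg
    rw [applyDer_mul, hfv, applyDer_C, zero_mul, mul_zero, add_zero]
  set g' := applyDer (fun j => C (v j)) g with hg'
  let θ (j : Fin ℓ) : MvPolynomial (Fin ℓ) F := (m + n) • (C (v j) * g) - g' * X j
  refine ⟨θ, fun hθ => ?_, fun j => ?_, ?_⟩
  · obtain ⟨i, hij⟩ := exists_ne j
    have hcross : ((m + n) • g) * (C (v j) * X i - C (v i) * X j) = θ j * X i - θ i * X j := by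
      simp only [θ, nsmul_eq_mul]; ring
    rw [hθ, Pi.zero_apply, Pi.zero_apply, zero_mul, zero_mul, sub_zero] at hcross
    have hlin := (mul_eq_zero.mp hcross).resolve_left (smul_ne_zero (by omega) hg₀)
    exact hj (by simpa [hij] using congrArg (eval (Pi.single i 1)) hlin)
  · have hdeg := (isHomogeneous_applyDer_C v hg).mul (isHomogeneous_X F j)
    rw [Nat.sub_add_cancel hn] at hdeg
    exact ((homogeneousSubmodule (Fin ℓ) F n).smul_of_tower_mem (m + n) (hg.C_mul (v j))).sub hdeg
  · have hsplit : applyDer θ (f * g) = (m + n) • g * applyDer (fun j => C (v j)) (f * g) -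
        applyDer (fun j => g' * X j) (f * g) := by
      simp only [applyDer, θ, Finset.mul_sum, ← Finset.sum_sub_distrib]
      exact Finset.sum_congr rfl fun j _ => by simp only [nsmul_eq_mul]; ring
    rw [hsplit, applyDer_mul_X g' (hf.mul hg), applyDer_mul, hfv, ← hg']
    simp only [nsmul_eq_mul]
    ring

theorem exists_isJacobianRelation_card_filter {A : Finset (MvPolynomial (Fin ℓ) F)}
    (hA : IsArrangement A) {v : Fin ℓ → F} (hv : v ≠ 0) :
    ∃ θ, IsJacobianRelation (Qpoly A) {α ∈ A | eval v α ≠ 0}.card θ := by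
  have hA₁ := isArrangement_of_subset hA (Finset.filter_subset (fun α => eval v α = 0) A)
  have hA₂ := isArrangement_of_subset hA (Finset.filter_subset (fun α => eval v α ≠ 0) A)
  have hkill : applyDer (fun j => C (v j)) (Qpoly {α ∈ A | eval v α = 0}) = 0 := by
    refine Finset.prod_induction _ (fun f => applyDer (fun j => C (v j)) f = 0)
      (fun f g hf hg => by rw [applyDer_mul, hf, hg, zero_mul, mul_zero, add_zero])
      (applyDer_C _ 1) fun α hα => ?_
    obtain ⟨hαA, hαv⟩ := Finset.mem_filter.mp hα
    rw [applyDer_C_of_isHomogeneous_one v (hA.1 α hαA).2, hαv, C_0]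
  have hQ : Qpoly {α ∈ A | eval v α = 0} * Qpoly {α ∈ A | eval v α ≠ 0} = Qpoly A :=
    Finset.prod_filter_mul_prod_filter_not A _ _
  rw [← hQ]
  exact exists_isJacobianRelation_mul hv (isHomogeneous_Qpoly hA₁) hkill (isHomogeneous_Qpoly hA₂)
    (Qpoly_ne_zero hA₂)

end MultiplicityBound

section LineForm

/-- The linear form `a·x + b·y − z` of `lineL` over an arbitrary ring of coefficients. -/
noncomputable def lineForm {R : Type*} [CommRing R] (a b : R) : MvPolynomial (Fin 3) R :=
  C a * X 0 + C b * X 1 - X 2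

section CommRing

variable {R : Type*} [CommRing R]

theorem eval_lineForm (a b : R) (v : Fin 3 → R) :
    eval v (lineForm a b) = a * v 0 + b * v 1 - v 2 := by
  simp [lineForm]

theorem isHomogeneous_lineForm (a b : R) : (lineForm a b).IsHomogeneous 1 :=
  (((isHomogeneous_X R 0).C_mul a).add ((isHomogeneous_X R 1).C_mul b)).sub (isHomogeneous_X R 2)

theorem lineForm_ne_zero [Nontrivial R] (a b : R) : lineForm a b ≠ 0 := fun h => by
  simpa [eval_lineForm] using congrArg (eval ![0, 0, 1]) h

theorem eq_of_lineForm_dvd_lineForm {a b a' b' : R} (h : lineForm a b ∣ lineForm a' b') :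
    a = a' ∧ b = b' := by
  obtain ⟨q, hq⟩ := h
  have ha := congrArg (eval ![1, 0, a]) hq
  have hb := congrArg (eval ![0, 1, b]) hq
  simp only [eval_lineForm, map_mul, Matrix.cons_val_zero, Matrix.cons_val_one,
    Matrix.cons_val, mul_zero, mul_one, add_zero, zero_add, sub_self, zero_mul, sub_eq_zero]
    at ha hb
  exact ⟨ha.symm, hb.symm⟩

theorem not_lineForm_dvd_X_one [Nontrivial R] (a b : R) : ¬ lineForm a b ∣ X 1 := by
  rintro ⟨q, hq⟩
  simpa [eval_lineForm] using congrArg (eval ![0, 1, b]) hq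

theorem not_X_zero_dvd_lineForm [Nontrivial R] (a b : R) : ¬ X 0 ∣ lineForm a b := by
  rintro ⟨q, hq⟩
  simpa [eval_lineForm] using congrArg (eval ![0, 0, 1]) hq

theorem applyDer_lineForm {F : Type*} [Field F] (θ : Fin 3 → MvPolynomial (Fin 3) F) (a b : F) :
    applyDer θ (lineForm a b) = C a * θ 0 + C b * θ 1 - θ 2 := by
  simp only [applyDer, lineForm, map_sub, map_add, Derivation.leibniz, pderiv_X, Pi.single_apply,
    smul_eq_mul, mul_ite, mul_one, mul_zero, derivation_C, add_zero, Fin.sum_univ_three,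
    ↓reduceIte, one_ne_zero, Fin.reduceEq, Fin.isValue, sub_zero, zero_ne_one, zero_add, zero_sub,
    mul_neg]
  ring

theorem lineForm_dvd_sub_aeval (a b : R) (p : MvPolynomial (Fin 3) R) :
    lineForm a b ∣ p - aeval ![X 0, X 1, C a * X 0 + C b * X 1] p := by
  rw [← Ideal.mem_span_singleton, ← Ideal.Quotient.eq]
  let π := Ideal.Quotient.mkₐ R (Ideal.span {lineForm a b})
  suffices π = π.comp (aeval ![X 0, X 1, C a * X 0 + C b * X 1]) from DFunLike.congr_fun this p
  have hX₂ : π (X 2) = π (C a * X 0 + C b * X 1) :=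
    (Ideal.Quotient.eq.mpr (Ideal.mem_span_singleton_self (lineForm a b))).symm
  ext i
  fin_cases i
  · simp
  · simp
  · simpa using hX₂

theorem eval_eq_zero_of_lineForm_dvd [IsDomain R] {a b a' b' t : R}
    {v w : MvPolynomial (Fin 3) R} (ha : a ≠ a') (ht : a * t + b = a' * t + b')
    (h : lineForm a b ∣ C a * v - w) (h' : lineForm a' b' ∣ C a' * v - w) :
    eval ![t, 1, a' * t + b'] v = 0 := by
  have hzero {c d : R} (hc : c * t + d = a' * t + b') (hdvd : lineForm c d ∣ C c * v - w) :
      c * eval ![t, 1, a' * t + b'] v = eval ![t, 1, a' * t + b'] w := by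
    have := map_dvd (eval ![t, 1, a' * t + b']) hdvd
    simpa [eval_lineForm, hc, sub_eq_zero] using this
  have := (hzero ht h).trans (hzero rfl h').symm
  exact (mul_eq_mul_right_iff.mp this).resolve_left ha

end CommRing

variable {F : Type*} [Field F]

theorem prime_lineForm (a b : F) : Prime (lineForm a b) :=
  prime_of_isHomogeneous_one (isHomogeneous_lineForm a b) (lineForm_ne_zero a b)

theorem lineForm_dvd_of_forall_eval [Infinite F] {a b : F} {p : MvPolynomial (Fin 3) F}
    (hp : ∀ x y, eval ![x, y, a * x + b * y] p = 0) : lineForm a b ∣ p := by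
  have hφ : aeval ![X 0, X 1, C a * X 0 + C b * X 1] p = (0 : MvPolynomial (Fin 3) F) := by
    refine MvPolynomial.funext fun v => ?_
    have hcomp : (eval v).comp (aeval (R := F) ![X 0, X 1, C a * X 0 + C b * X 1]).toRingHom =
        eval ![v 0, v 1, a * v 0 + b * v 1] := by
      ext i
      · simp
      · fin_cases i <;> simp
    rw [map_zero, ← hp (v 0) (v 1), ← hcomp]
    rfl
  simpa only [hφ, sub_zero] using lineForm_dvd_sub_aeval a b p

theorem lineForm_dvd_of_lt_card [Infinite F] {a b : F} {p : MvPolynomial (Fin 3) F} {k : ℕ}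
    (hp : p.IsHomogeneous k) {s : Finset F} (hs : k < s.card)
    (hps : ∀ t ∈ s, eval ![t, 1, a * t + b] p = 0) : lineForm a b ∣ p := by
  have hpoint (t : F) : ![t, 1, a * t + b] = ![0, 1, b] + t • ![1, 0, a] := by
    ext i; fin_cases i <;> simp [mul_comm, add_comm]
  have hall (t : F) : eval ![t, 1, a * t + b] p = 0 := by
    simp only [hpoint] at hps ⊢
    exact eval_add_smul_eq_zero_of_totalDegree_lt_card (hp.totalDegree_le.trans_lt hs) _ _ hps t
  -- The factor `X 1` takes care of `(1 : 0 : a)`, the only point of the line outside this chart.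
  suffices lineForm a b ∣ p * X 1 from
    ((prime_lineForm a b).dvd_or_dvd this).resolve_right (not_lineForm_dvd_X_one a b)
  refine lineForm_dvd_of_forall_eval fun x y => ?_
  obtain rfl | hy := eq_or_ne y 0
  · simp
  have hscale : ![x, y, a * x + b * y] = y • ![x / y, 1, a * (x / y) + b] := by
    ext i; fin_cases i <;> simp <;> field_simp
  rw [map_mul, hscale, eval_smul_of_isHomogeneous hp, hall, mul_zero, zero_mul]

end LineForm

section NearGeneric

/-- The lines `x = 0`, `y = 0` and `L i = lineForm (a i) (b i)` are in general position up to
consecutive indices: if `i + 2 ≤ m` and `j + 2 ≤ m`, then `L m` avoids the points where `L i` meets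
`y = 0` and `x = 0`, and the point where `L i` meets `L j`. -/
structure IsNearGeneric {F : Type*} [Field F] (a b : ℕ → F) : Prop where
  fst_ne {i m : ℕ} : i + 2 ≤ m → a i ≠ a m
  snd_ne {i m : ℕ} : i + 2 ≤ m → b i ≠ b m
  not_concurrent {i j m : ℕ} : i < j → j + 2 ≤ m →
    (a i - a m) * (b j - b m) ≠ (a j - a m) * (b i - b m)

variable {F : Type*} [Field F] {a b : ℕ → F}

/-- The parameter `t` for which the lines `lineForm (a i) (b i)` and `lineForm (a m) (b m)` meet in
the point `(t : 1 : a m * t + b m)`; meaningful when `a i ≠ a m`. -/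
def meetParam (a b : ℕ → F) (m i : ℕ) : F :=
  (b m - b i) / (a i - a m)

theorem mul_meetParam_add {i m : ℕ} (hi : a i ≠ a m) :
    a i * meetParam a b m i + b i = a m * meetParam a b m i + b m := by
  have hcancel : meetParam a b m i * (a i - a m) = b m - b i :=
    div_mul_cancel₀ _ (sub_ne_zero.mpr hi)
  linear_combination hcancel

namespace IsNearGeneric

theorem not_lineForm_dvd (h : IsNearGeneric a b) {i j : ℕ} (hij : i < j) :
    ¬ lineForm (a i) (b i) ∣ lineForm (a j) (b j) := by
  intro hdvd
  obtain ⟨ha, hb⟩ := eq_of_lineForm_dvd_lineForm hdvd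
  exact h.not_concurrent hij le_rfl (by rw [ha, hb])

theorem meetParam_ne_zero (h : IsNearGeneric a b) {i m : ℕ} (hi : i + 2 ≤ m) :
    meetParam a b m i ≠ 0 :=
  div_ne_zero (sub_ne_zero.mpr (h.snd_ne hi).symm) (sub_ne_zero.mpr (h.fst_ne hi))

theorem injOn_meetParam (h : IsNearGeneric a b) (m : ℕ) :
    Set.InjOn (meetParam a b m) {i | i + 2 ≤ m} := by
  have hne {i j : ℕ} (hij : i < j) (hj : j + 2 ≤ m) : meetParam a b m i ≠ meetParam a b m j := by
    intro ht
    have ha {k : ℕ} (hk : k + 2 ≤ m) : a k - a m ≠ 0 := sub_ne_zero.mpr (h.fst_ne hk)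
    rw [meetParam, meetParam, div_eq_div_iff (ha (by omega)) (ha hj)] at ht
    exact h.not_concurrent hij hj (by linear_combination ht)
  intro i hi j hj ht
  by_contra hij
  obtain hij | hji := lt_or_gt_of_ne hij
  exacts [hne hij hj ht, hne hji hi ht.symm]

-- On `L (r + 1)` the form `v`, of degree `r`, vanishes at the `r + 1` distinct points where that
-- line meets `x = 0` and `L 0, …, L (r - 1)`.
theorem lineForm_dvd_and_lineForm_dvd [Infinite F] (h : IsNearGeneric a b) {r : ℕ}
    {v w : MvPolynomial (Fin 3) F} (hv : v.IsHomogeneous r) (hxv : X 0 ∣ v)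
    (hvw : ∀ i < r + 2, lineForm (a i) (b i) ∣ C (a i) * v - w) :
    lineForm (a (r + 1)) (b (r + 1)) ∣ v ∧ lineForm (a (r + 1)) (b (r + 1)) ∣ w := by
  suffices hLv : lineForm (a (r + 1)) (b (r + 1)) ∣ v from
    ⟨hLv, (dvd_sub_right (hLv.mul_left _)).mp (hvw (r + 1) (by omega))⟩
  have hlt {i : ℕ} (hi : i ∈ Finset.range r) : i + 2 ≤ r + 1 :=
    Nat.succ_le_succ (Finset.mem_range.mp hi)
  have hcard : r < (insert 0 ((Finset.range r).image (meetParam a b (r + 1)))).card := by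
    have hinj := (h.injOn_meetParam (r + 1)).mono fun i hi => hlt (Finset.mem_coe.mp hi)
    rw [Finset.card_insert_of_notMem, Finset.card_image_of_injOn hinj, Finset.card_range]
    · exact Nat.lt_succ_self r
    · simp only [Finset.mem_image, not_exists, not_and]
      exact fun i hi => h.meetParam_ne_zero (hlt hi)
  refine lineForm_dvd_of_lt_card hv hcard fun t ht => ?_
  obtain rfl | ht := Finset.mem_insert.mp ht
  · simpa using map_dvd (eval ![0, 1, a (r + 1) * 0 + b (r + 1)]) hxv
  · obtain ⟨i, hi, rfl⟩ := Finset.mem_image.mp ht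
    have ha := h.fst_ne (hlt hi)
    exact eval_eq_zero_of_lineForm_dvd ha (mul_meetParam_add ha)
      (hvw i (by have := hlt hi; omega)) (hvw (r + 1) (by omega))

theorem eq_zero_and_eq_zero [Infinite F] (h : IsNearGeneric a b) {r : ℕ}
    {v w : MvPolynomial (Fin 3) F} (hv : v.IsHomogeneous r) (hw : w.IsHomogeneous r)
    (hxv : X 0 ∣ v) (hvw : ∀ i < r + 2, lineForm (a i) (b i) ∣ C (a i) * v - w) :
    v = 0 ∧ w = 0 := by
  induction r generalizing v w with
  | zero =>
    obtain ⟨hLv, hLw⟩ := h.lineForm_dvd_and_lineForm_dvd hv hxv hvw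
    have hL := isHomogeneous_lineForm (a 1) (b 1)
    exact ⟨eq_zero_of_dvd_of_isHomogeneous_of_lt hL hv one_pos hLv,
      eq_zero_of_dvd_of_isHomogeneous_of_lt hL hw one_pos hLw⟩
  | succ r ih =>
    obtain ⟨⟨v, rfl⟩, w, rfl⟩ := h.lineForm_dvd_and_lineForm_dvd hv hxv hvw
    have hdeg {p : MvPolynomial (Fin 3) F}
        (hp : (lineForm (a (r + 1 + 1)) (b (r + 1 + 1)) * p).IsHomogeneous (r + 1)) :
        p.IsHomogeneous r :=
      isHomogeneous_of_mul_left (isHomogeneous_lineForm _ _) (lineForm_ne_zero _ _)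
        (Nat.add_comm 1 r ▸ hp)
    have hxv' : X 0 ∣ v := (X_prime.dvd_or_dvd hxv).resolve_left (not_X_zero_dvd_lineForm _ _)
    have hvw' (i : ℕ) (hi : i < r + 2) : lineForm (a i) (b i) ∣ C (a i) * v - w := by
      have hdvd := hvw i (by omega)
      rw [mul_left_comm, ← mul_sub] at hdvd
      exact ((prime_lineForm _ _).dvd_or_dvd hdvd).resolve_left (h.not_lineForm_dvd hi)
    obtain ⟨rfl, rfl⟩ := ih (hdeg hv) (hdeg hw) hxv' hvw'
    simp only [mul_zero, and_self]

end IsNearGeneric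

/-- The arrangement of `x = 0`, `y = 0` and the first `m` lines `lineForm (a i) (b i)`. -/
noncomputable def lineArr (a b : ℕ → F) (m : ℕ) : Finset (MvPolynomial (Fin 3) F) :=
  insert (X 0) (insert (X 1) ((Finset.range m).image fun i => lineForm (a i) (b i)))

theorem mem_lineArr {m : ℕ} {α : MvPolynomial (Fin 3) F} :
    α ∈ lineArr a b m ↔ α = X 0 ∨ α = X 1 ∨ ∃ i < m, lineForm (a i) (b i) = α := by
  simp only [lineArr, Finset.mem_insert, Finset.mem_image, Finset.mem_range]

theorem mem_lineArr_succ {m : ℕ} {α : MvPolynomial (Fin 3) F} :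
    α ∈ lineArr a b (m + 1) ↔ α = lineForm (a m) (b m) ∨ α ∈ lineArr a b m := by
  simp only [lineArr, Finset.range_add_one, Finset.image_insert, Finset.mem_insert]
  tauto

theorem isArrangement_lineArr (a b : ℕ → F) (m : ℕ) : IsArrangement (lineArr a b m) := by
  refine ⟨fun α hα => ?_, fun α hα β hβ hαβ c hc => hαβ ?_⟩
  · obtain rfl | rfl | ⟨i, -, rfl⟩ := mem_lineArr.mp hα
    · exact ⟨X_ne_zero 0, isHomogeneous_X F 0⟩
    · exact ⟨X_ne_zero 1, isHomogeneous_X F 1⟩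
    · exact ⟨lineForm_ne_zero _ _, isHomogeneous_lineForm _ _⟩
  · have hx := congrArg (eval ![1, 0, 0]) hc.symm
    have hy := congrArg (eval ![0, 1, 0]) hc.symm
    have hz := congrArg (eval ![0, 0, 1]) hc.symm
    rw [mem_lineArr] at hα hβ
    clear hc
    obtain rfl | rfl | ⟨i, -, rfl⟩ := hα <;> obtain rfl | rfl | ⟨j, -, rfl⟩ := hβ <;>
      simp only [smul_eval, eval_X, eval_lineForm, Matrix.cons_val, mul_zero, mul_one, add_zero,
        zero_add, zero_sub, sub_zero, mul_neg_one, neg_inj, zero_eq_neg, one_ne_zero]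
        at hx hy hz <;>
      simp_all

theorem IsNearGeneric.le_add_one_of_isJacobianRelation [CharZero F] (h : IsNearGeneric a b)
    {A : Finset (MvPolynomial (Fin 3) F)} (hA : IsArrangement A) (hx : X 0 ∈ A) (hy : X 1 ∈ A)
    {m : ℕ} (hL : ∀ i < m, lineForm (a i) (b i) ∈ A) {r : ℕ}
    {θ : Fin 3 → MvPolynomial (Fin 3) F} (hθ : IsJacobianRelation (Qpoly A) r θ) : m ≤ r + 1 := by
  obtain ⟨hθ₀, hdeg, hder⟩ := hθ
  by_contra! hm
  obtain ⟨q, hq⟩ : X 1 ∣ θ 1 := applyDer_X θ 1 ▸ dvd_applyDer_of_mem hA hder hy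
  have hXq (j : Fin 3) : (X j * q).IsHomogeneous r :=
    isHomogeneous_mul_of_isHomogeneous_mul (isHomogeneous_X F 1) (X_ne_zero 1)
      (isHomogeneous_X F j) (hq ▸ hdeg 1)
  have hxv : X 0 ∣ θ 0 - X 0 * q :=
    dvd_sub (applyDer_X θ 0 ▸ dvd_applyDer_of_mem hA hder hx) (dvd_mul_right _ _)
  have hvw (i : ℕ) (hi : i < r + 2) :
      lineForm (a i) (b i) ∣ C (a i) * (θ 0 - X 0 * q) - (θ 2 - X 2 * q) := by
    have hsplit : C (a i) * (θ 0 - X 0 * q) - (θ 2 - X 2 * q) =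
        applyDer θ (lineForm (a i) (b i)) - lineForm (a i) (b i) * q := by
      rw [applyDer_lineForm, hq, lineForm]; ring
    rw [hsplit]
    exact dvd_sub (dvd_applyDer_of_mem hA hder (hL i (by omega))) (dvd_mul_right _ _)
  obtain ⟨hv, hw⟩ := h.eq_zero_and_eq_zero ((hdeg 0).sub (hXq 0)) ((hdeg 2).sub (hXq 2)) hxv hvw
  have hθq : θ = fun j => q * X j := by
    funext j
    fin_cases j
    exacts [(sub_eq_zero.mp hv).trans (mul_comm _ _), hq.trans (mul_comm _ _),
      (sub_eq_zero.mp hw).trans (mul_comm _ _)]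
  have hcard : A.card ≠ 0 := (Finset.card_pos.mpr ⟨_, hx⟩).ne'
  rw [hθq, applyDer_mul_X q (isHomogeneous_Qpoly hA)] at hder
  have hq₀ : q = 0 := (mul_eq_zero.mp ((smul_eq_zero.mp hder).resolve_left hcard)).resolve_right
    (Qpoly_ne_zero hA)
  exact hθ₀ (by simp [hθq, hq₀, ← Pi.zero_def])

theorem card_filter_eval_lineArr_le {m : ℕ} (hm : 2 ≤ m) (h01 : a 0 = a 1) :
    {α ∈ lineArr a b m | eval ![1, 0, a 0] α ≠ 0}.card ≤ m - 1 := by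
  have hsub : {α ∈ lineArr a b m | eval ![1, 0, a 0] α ≠ 0} ⊆
      insert (X 0) ((Finset.Ico 2 m).image fun i => lineForm (a i) (b i)) := by
    intro α hα
    rw [Finset.mem_filter, mem_lineArr] at hα
    obtain ⟨rfl | rfl | ⟨i, hi, rfl⟩, hα⟩ := hα
    · exact Finset.mem_insert_self _ _
    · simp at hα
    · have hi₂ : 2 ≤ i := by
        by_contra! hi₂
        interval_cases i <;> simp [eval_lineForm, h01] at hα
      exact Finset.mem_insert_of_mem
        (Finset.mem_image_of_mem (fun i => lineForm (a i) (b i)) (Finset.mem_Ico.mpr ⟨hi₂, hi⟩))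
  calc _ ≤ _ := Finset.card_le_card hsub
    _ ≤ ((Finset.Ico 2 m).image fun i => lineForm (a i) (b i)).card + 1 :=
      Finset.card_insert_le _ _
    _ ≤ (m - 2) + 1 := by
      simpa using Finset.card_image_le (s := Finset.Ico 2 m) (f := fun i => lineForm (a i) (b i))
    _ = m - 1 := by omega

theorem IsNearGeneric.mdr_lineArr [CharZero F] (h : IsNearGeneric a b) (h01 : a 0 = a 1) {m : ℕ}
    (hm : 2 ≤ m) : mdr (lineArr a b m) = m - 1 := by
  have hA := isArrangement_lineArr a b m
  have hv : ![1, 0, a 0] ≠ 0 := fun hv => one_ne_zero (congrFun hv 0)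
  have hex := exists_isJacobianRelation_card_filter hA hv
  apply le_antisymm
  · exact (Nat.sInf_le hex).trans (card_filter_eval_lineArr_le hm h01)
  · refine le_csInf ⟨_, hex⟩ fun r ⟨θ, hθ⟩ => Nat.sub_le_of_le_add ?_
    exact h.le_add_one_of_isJacobianRelation hA (mem_lineArr.mpr (.inl rfl))
      (mem_lineArr.mpr (.inr (.inl rfl)))
      (fun i hi => mem_lineArr.mpr (.inr (.inr ⟨i, hi, rfl⟩))) hθ

end NearGeneric

section Coefficients

theorem two_mul_two_pow_sub_one_le_three_pow_sub_one {n : ℕ} (hn : 1 ≤ n) :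
    2 * ((2 : ℚ) ^ n - 1) ≤ 3 ^ n - 1 := by
  induction n, hn using Nat.le_induction with
  | base => norm_num
  | succ n _ ih =>
    have : (1 : ℚ) ≤ 2 ^ n := one_le_pow₀ one_le_two
    rw [pow_succ, pow_succ]
    linarith

theorem two_mul_two_pow_add_one_sub_one_le_three_pow_sub_one {n : ℕ} (hn : 4 ≤ n) :
    2 * ((2 : ℚ) ^ (n + 1) - 1) ≤ 3 ^ n - 1 := by
  induction n, hn using Nat.le_induction with
  | base => norm_num
  | succ n _ ih =>
    have : (1 : ℚ) ≤ 2 ^ (n + 1) := one_le_pow₀ one_le_two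
    rw [pow_succ, pow_succ 3]
    linarith

theorem inv_pow_eq_or_le {x : ℚ} (hx : 1 ≤ x) {n v : ℕ} (hv : n ≤ v) :
    (x ^ v)⁻¹ = (x ^ n)⁻¹ ∨ (x ^ v)⁻¹ ≤ (x ^ (n + 1))⁻¹ := by
  obtain rfl | hlt := hv.eq_or_lt
  · exact .inl rfl
  · exact .inr (inv_anti₀ (by positivity) (pow_le_pow_right₀ hx hlt))

-- Unless `(u, u')` is one of `(1, 0)`, `(2, 1)`, `(3, 2)`, `(4, 3)`, the factor `3 ^ u' - 1` is at
-- least `2 * (2 ^ u - 1)`; as `(2 ^ v)⁻¹ ≤ 1 / 2`, the right-hand side is then the larger one.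
theorem two_pow_three_pow_ne {u u' v v' : ℕ} (hv : 1 ≤ v) (hv' : 1 ≤ v') (h₀ : 1 ≤ u + u')
    (h₁ : u ≤ u' + 1) :
    ((2 : ℚ) ^ u - 1) * (1 - (3 ^ v')⁻¹) ≠ (1 - (2 ^ v)⁻¹) * (3 ^ u' - 1) := by
  have hV₀ : (0 : ℚ) < (2 ^ v)⁻¹ := by positivity
  have hT₀ : (0 : ℚ) < (3 ^ v')⁻¹ := by positivity
  have hV : ((2 : ℚ) ^ v)⁻¹ = 1 / 2 ∨ ((2 : ℚ) ^ v)⁻¹ = 1 / 4 ∨ ((2 : ℚ) ^ v)⁻¹ ≤ 1 / 8 := by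
    obtain rfl | hv₂ := hv.eq_or_lt
    · norm_num
    · refine .inr ((inv_pow_eq_or_le one_le_two hv₂).imp ?_ ?_) <;> norm_num
  have hT : ((3 : ℚ) ^ v')⁻¹ = 1 / 3 ∨ ((3 : ℚ) ^ v')⁻¹ ≤ 1 / 9 := by
    refine (inv_pow_eq_or_le (x := 3) (by norm_num) hv').imp ?_ ?_ <;> norm_num
  generalize ((2 : ℚ) ^ v)⁻¹ = V at hV₀ hV ⊢
  generalize ((3 : ℚ) ^ v')⁻¹ = T at hT₀ hT ⊢
  have hcases : (1 ≤ u' ∧ (u ≤ u' ∨ u = u' + 1 ∧ 4 ≤ u')) ∨ (u = 1 ∧ u' = 0) ∨ (u = 2 ∧ u' = 1) ∨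
      (u = 3 ∧ u' = 2) ∨ (u = 4 ∧ u' = 3) := by omega
  obtain ⟨hu', hu⟩ | ⟨rfl, rfl⟩ | ⟨rfl, rfl⟩ | ⟨rfl, rfl⟩ | ⟨rfl, rfl⟩ := hcases
  · have hV₁ : V ≤ 1 / 2 := by obtain h | h | h := hV <;> linarith
    have hle : 2 * ((2 : ℚ) ^ u - 1) ≤ 3 ^ u' - 1 := by
      obtain huu' | ⟨rfl, hu'₄⟩ := hu
      · have hmono : (2 : ℚ) ^ u ≤ 2 ^ u' := pow_le_pow_right₀ one_le_two huu'
        linarith [two_mul_two_pow_sub_one_le_three_pow_sub_one hu']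
      · exact two_mul_two_pow_add_one_sub_one_le_three_pow_sub_one hu'₄
    have hpos : (0 : ℚ) < 3 ^ u' - 1 :=
      sub_pos.mpr (one_lt_pow₀ (by norm_num) (Nat.one_le_iff_ne_zero.mp hu'))
    refine ne_of_lt ?_
    calc ((2 : ℚ) ^ u - 1) * (1 - T) ≤ (3 ^ u' - 1) / 2 * (1 - T) := by
          gcongr
          · obtain h | h := hT <;> linarith
          · linarith
      _ < 1 / 2 * (3 ^ u' - 1) := by nlinarith
      _ ≤ (1 - V) * (3 ^ u' - 1) := by gcongr; linarith
  all_goals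
    intro h
    obtain hV | hV | hV := hV <;> obtain hT | hT := hT <;> linarith

/-- The coefficients of `x` in the lines of `B_d`, listed so that lines `2n` and `2n + 1` are
`x/2^(n+1) + y/3^(n+1) − z` and `x/2^(n+1) + y/3^(n+2) − z`. -/
def xCoeff (i : ℕ) : ℚ := 1 / 2 ^ (i / 2 + 1)

/-- The coefficients of `y` in the lines of `B_d`, in the order of `xCoeff`. -/
def yCoeff (i : ℕ) : ℚ := 1 / 3 ^ ((i + 1) / 2 + 1)

theorem isNearGeneric_xCoeff_yCoeff : IsNearGeneric xCoeff yCoeff where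
  fst_ne {i m} him h := by
    rw [xCoeff, xCoeff, one_div, one_div, inv_inj] at h
    have := pow_right_injective₀ (by norm_num : (0 : ℚ) < 2) (by norm_num) h
    omega
  snd_ne {i m} him h := by
    rw [yCoeff, yCoeff, one_div, one_div, inv_inj] at h
    have := pow_right_injective₀ (by norm_num : (0 : ℚ) < 3) (by norm_num) h
    omega
  not_concurrent {i j m} hij hjm h := by
    obtain ⟨u, hu⟩ : ∃ u, j / 2 = i / 2 + u := Nat.exists_eq_add_of_le (by omega)
    obtain ⟨u', hu'⟩ : ∃ u', (j + 1) / 2 = (i + 1) / 2 + u' := Nat.exists_eq_add_of_le (by omega)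
    obtain ⟨v, hv⟩ : ∃ v, m / 2 = j / 2 + v := Nat.exists_eq_add_of_le (by omega)
    obtain ⟨v', hv'⟩ : ∃ v', (m + 1) / 2 = (j + 1) / 2 + v' := Nat.exists_eq_add_of_le (by omega)
    refine two_pow_three_pow_ne (u := u) (u' := u') (v := v) (v' := v')
      (by omega) (by omega) (by omega) (by omega) ?_
    simp only [xCoeff, yCoeff, hv, hv', hu, hu', pow_add] at h
    field_simp at h ⊢
    linarith

theorem lineForm_coeff_two_mul (n : ℕ) : lineForm (xCoeff (2 * n)) (yCoeff (2 * n)) =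
    lineL (1 / 2 ^ (n + 1)) (1 / 3 ^ (n + 1)) := by
  rw [xCoeff, yCoeff, lineForm, lineL, (by omega : 2 * n / 2 = n), (by omega : (2 * n + 1) / 2 = n)]

theorem lineForm_coeff_two_mul_add_one (n : ℕ) :
    lineForm (xCoeff (2 * n + 1)) (yCoeff (2 * n + 1)) =
      lineL (1 / 2 ^ (n + 1)) (1 / 3 ^ (n + 1 + 1)) := by
  rw [xCoeff, yCoeff, lineForm, lineL, (by omega : (2 * n + 1) / 2 = n),
    (by omega : (2 * n + 1 + 1) / 2 = n + 1)]

theorem baseB_eq_lineArr (n : ℕ) : baseB (n + 1) = lineArr xCoeff yCoeff (2 * n) := by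
  ext α
  simp only [baseB, mem_lineArr, Finset.mem_union, Finset.mem_insert, Finset.mem_singleton,
    Finset.mem_image, Finset.mem_Icc, Nat.add_sub_cancel]
  constructor
  · rintro (((rfl | rfl) | ⟨j, ⟨hj₁, hjn⟩, rfl⟩) | ⟨j, ⟨hj₁, hjn⟩, rfl⟩)
    · exact .inl rfl
    · exact .inr (.inl rfl)
    all_goals obtain ⟨k, rfl⟩ := Nat.exists_eq_add_of_le' hj₁
    · exact .inr (.inr ⟨2 * k, by omega, lineForm_coeff_two_mul k⟩)
    · exact .inr (.inr ⟨2 * k + 1, by omega, lineForm_coeff_two_mul_add_one k⟩)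
  · rintro (rfl | rfl | ⟨i, hi, rfl⟩)
    · exact .inl (.inl (.inl rfl))
    · exact .inl (.inl (.inr rfl))
    obtain ⟨k, rfl | rfl⟩ := Nat.even_or_odd' i
    · exact .inl (.inr ⟨k + 1, by omega, (lineForm_coeff_two_mul k).symm⟩)
    · exact .inr ⟨k + 1, by omega, (lineForm_coeff_two_mul_add_one k).symm⟩

theorem Bfam_eq_lineArr {d : ℕ} (hd : 4 ≤ d) : Bfam d = lineArr xCoeff yCoeff (d - 2) := by
  obtain ⟨n, hn⟩ : ∃ n, d / 2 = n + 1 := Nat.exists_eq_add_of_le' (by omega)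
  rw [Bfam, hn, baseB_eq_lineArr]
  split_ifs with heven
  · rw [(by omega : d - 2 = 2 * n)]
  · ext α
    rw [(by omega : d - 2 = 2 * n + 1), Finset.mem_insert, mem_lineArr_succ, lineForm_coeff_two_mul]

end Coefficients

theorem mdr_Bfam_general (d : ℕ) (hd : 4 ≤ d) : mdr (Bfam d) = d - 3 := by
  rw [Bfam_eq_lineArr hd, isNearGeneric_xCoeff_yCoeff.mdr_lineArr (by simp [xCoeff]) (by omega)]
  omega

/-- For the family of line arrangements `B_d` (`d ≥ 7`) defined above,
one has `r(B_d) = d − 3` for all `d ≥ 7`. -/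
theorem mdr_Bfam (d : ℕ) (hd : 7 ≤ d) : mdr (Bfam d) = d - 3 := by
  exact mdr_Bfam_general d (by omega)
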